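/- (Lemma 3.1) The constants C1 = (−δ3 β_s + (δ3−1) β_b k)/((δ1−δ3) k^{δ1}), C3 = (δ1 β_s − (δ1−1) β_b k)/((δ1−δ3) k^{δ3}), and C2 = [(1−a0)(η+a1)(1−δ1)(−δ3) + (1−a1)(η+a0)(1−δ3)δ1] β_s / ({(1+η)(δ1δ3+γ2) − δ1[(a1+η)γ2 + (1−a1)] − δ3[(a1+η) + γ2(1−a1)]} k^{γ2}) are all strictly positive. -/

import Mathlib

/-!
In the first asset as numéraire, `δ1`, `γ2`, `δ3` are the roots of `σ x (x - m) = r` for the three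
rates `r = ρ - μ1`, `ρ + λ0 - μ1`, `ρ + λ0 + λ1 - μ1`. Passing to the second asset shifts every root
by `-1`, `m` by `-2`, and replaces `μ1` by `μ2`. Hence `1 - a0`, `(η + a0) / η` and `1 - a1`,
`(η + a1) / η` are ratios of values of one and the same quadratic, and the expressions built from
them collapse to products of factors of known sign.

Write `k = (N / D) (β_s / β_b)`. The numerators of `C3` and `C1` are then positive multiples of
`(1 - δ1) N + δ1 D` and `(δ3 - 1) N - δ3 D`, which collapse in this way. As
`N = γ2 (1 - a0) (δ1 - δ3) - (1 + η) δ1 (γ2 - δ3)` is positive, the positivity of the second one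
yields `D > 0`.
-/

open Real

/-- The smaller root of `σ x (x - m) = r`, meaningful for `σ > 0` and `r ≥ 0`. -/
noncomputable def lowerRoot (σ m r : ℝ) : ℝ := (m - √(m ^ 2 + 4 * r / σ)) / 2

/-- The larger root of `σ x (x - m) = r`, meaningful for `σ > 0` and `r ≥ 0`. -/
noncomputable def upperRoot (σ m r : ℝ) : ℝ := (m + √(m ^ 2 + 4 * r / σ)) / 2

section Roots

variable {σ m r s : ℝ}

lemma mul_lowerRoot_mul_sub (hσ : 0 < σ) (hr : 0 ≤ r) :
    σ * (lowerRoot σ m r * (lowerRoot σ m r - m)) = r := by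
  have hsq : √(m ^ 2 + 4 * r / σ) ^ 2 = m ^ 2 + 4 * r / σ := sq_sqrt (by positivity)
  have hcancel : σ * (r / σ) = r := mul_div_cancel₀ r hσ.ne'
  unfold lowerRoot
  linear_combination σ / 4 * hsq + hcancel

lemma mul_upperRoot_mul_sub (hσ : 0 < σ) (hr : 0 ≤ r) :
    σ * (upperRoot σ m r * (upperRoot σ m r - m)) = r := by
  have hsum : upperRoot σ m r = m - lowerRoot σ m r := by unfold upperRoot lowerRoot; ring
  rw [hsum]
  linear_combination mul_lowerRoot_mul_sub (m := m) hσ hr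

lemma lt_sqrt_sq_add_four_mul_div (hσ : 0 < σ) (hr : 0 < r) : m < √(m ^ 2 + 4 * r / σ) :=
  lt_sqrt_of_sq_lt (lt_add_of_pos_right _ (by positivity))

lemma lowerRoot_neg (hσ : 0 < σ) (hr : 0 < r) : lowerRoot σ m r < 0 := by
  unfold lowerRoot
  linarith [lt_sqrt_sq_add_four_mul_div (m := m) hσ hr]

lemma lt_upperRoot (hσ : 0 < σ) (hr : 0 < r) : m < upperRoot σ m r := by
  unfold upperRoot
  linarith [lt_sqrt_sq_add_four_mul_div (m := m) hσ hr]

lemma lowerRoot_lt_lowerRoot (hσ : 0 < σ) (hr : 0 ≤ r) (hrs : r < s) :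
    lowerRoot σ m s < lowerRoot σ m r := by
  unfold lowerRoot
  gcongr

end Roots

/-- The ratio of the values of the quadratic `x (x - m)` at `δ` and at `γ`. -/
noncomputable def rootRatio (m γ δ : ℝ) : ℝ := δ * (δ - m) / (γ * (γ - m))

/-- `δ₁`, `γ`, `δ₃` are characteristic exponents of the switching problem, in units of an asset with
drift `μ`: roots of `σ x (x - m) = r` for `r = ρ - μ`, `ρ + lam0 - μ`, `ρ + lam0 + lam1 - μ`. -/
structure CharExponents (σ m μ ρ lam0 lam1 γ δ₁ δ₃ : ℝ) : Prop where
  root_δ₁ : σ * (δ₁ * (δ₁ - m)) = ρ - μ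
  root_γ : σ * (γ * (γ - m)) = ρ + lam0 - μ
  root_δ₃ : σ * (δ₃ * (δ₃ - m)) = ρ + lam0 + lam1 - μ

namespace CharExponents

variable {σ m μ ν ρ lam0 lam1 γ δ₁ δ₃ : ℝ}

lemma change_numeraire (h : CharExponents σ m μ ρ lam0 lam1 γ δ₁ δ₃) (hm : σ * (m - 1) = μ - ν) :
    CharExponents σ (m - 2) ν ρ lam0 lam1 (γ - 1) (δ₁ - 1) (δ₃ - 1) where
  root_δ₁ := by linear_combination h.root_δ₁ + hm
  root_γ := by linear_combination h.root_γ + hm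
  root_δ₃ := by linear_combination h.root_δ₃ + hm

lemma upperExponent_pos (h : CharExponents σ m μ ρ lam0 lam1 γ δ₁ δ₃) (hσ : 0 < σ)
    (hμ : μ < ρ + lam0) (hγ : m < γ) : 0 < γ := by
  have hprod : 0 < σ * (γ * (γ - m)) := by rw [h.root_γ]; linarith
  exact pos_of_mul_pos_left (pos_of_mul_pos_right hprod hσ.le) (sub_pos.2 hγ).le

lemma one_sub_div_eq_rootRatio (h : CharExponents σ m μ ρ lam0 lam1 γ δ₁ δ₃) (hσ : σ ≠ 0)
    (hμ : ρ + lam0 - μ ≠ 0) : 1 - lam0 / (ρ + lam0 - μ) = rootRatio m γ δ₁ := by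
  rw [rootRatio, ← mul_div_mul_left _ (γ * (γ - m)) hσ, h.root_δ₁, h.root_γ]
  field_simp
  ring

lemma div_add_div_eq_mul_rootRatio (h : CharExponents σ m μ ρ lam0 lam1 γ δ₁ δ₃) (hσ : σ ≠ 0)
    (hlam1 : lam1 ≠ 0) (hμ : ρ + lam0 - μ ≠ 0) :
    lam0 / lam1 + lam0 / (ρ + lam0 - μ) = lam0 / lam1 * rootRatio m γ δ₃ := by
  rw [rootRatio, ← mul_div_mul_left _ (γ * (γ - m)) hσ, h.root_δ₃, h.root_γ]
  field_simp
  ring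

end CharExponents

section RatioInequalities

variable {m γ δ δ₁ δ₃ : ℝ}

/-- The combination of the weights `u₀` and `u₁`, one for each numéraire, to which the numerators of
`C1` (at `δ = δ3`) and `C3` (at `δ = δ1`) reduce. -/
def smoothFitGap (γ u₀ u₁ δ : ℝ) : ℝ := γ * u₀ * (1 - δ) + (γ - 1) * u₁ * δ

lemma smoothFitGap_mul_mul (γ c u₀ u₁ δ : ℝ) :
    smoothFitGap γ (c * u₀) (c * u₁) δ = c * smoothFitGap γ u₀ u₁ δ := by
  unfold smoothFitGap
  ring

lemma smoothFitGap_rootRatio_pos (hδ : δ < 0) (hγ : 1 < γ) (hmγ : m < γ) :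
    0 < smoothFitGap γ (rootRatio m γ δ) (rootRatio (m - 2) (γ - 1) (δ - 1)) δ := by
  have : 0 < γ := by linarith
  have : 0 < γ - 1 := sub_pos.2 hγ
  have : 0 < γ - m := sub_pos.2 hmγ
  have : 0 < γ - 1 - (m - 2) := by linarith
  have hfactor : smoothFitGap γ (rootRatio m γ δ) (rootRatio (m - 2) (γ - 1) (δ - 1)) δ =
      -δ * (1 - δ) * (γ - δ) / ((γ - m) * (γ - 1 - (m - 2))) := by
    unfold smoothFitGap rootRatio
    field_simp
    ring
  rw [hfactor]
  have : 0 < -δ := neg_pos.2 hδ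
  have : 0 < 1 - δ := by linarith
  have : 0 < γ - δ := by linarith
  positivity

lemma rootRatio_cross_pos (hδ₃₁ : δ₃ < δ₁) (hδ₁ : δ₁ < 0) (hγ : 1 < γ) (hmγ : m < γ) :
    0 < rootRatio m γ δ₁ * rootRatio (m - 2) (γ - 1) (δ₃ - 1) * (1 - δ₁) * (-δ₃) +
      rootRatio (m - 2) (γ - 1) (δ₁ - 1) * rootRatio m γ δ₃ * (1 - δ₃) * δ₁ := by
  have : 0 < γ := by linarith
  have : 0 < γ - 1 := sub_pos.2 hγ
  have : 0 < γ - m := sub_pos.2 hmγ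
  have : 0 < γ - 1 - (m - 2) := by linarith
  have hfactor : rootRatio m γ δ₁ * rootRatio (m - 2) (γ - 1) (δ₃ - 1) * (1 - δ₁) * (-δ₃) +
      rootRatio (m - 2) (γ - 1) (δ₁ - 1) * rootRatio m γ δ₃ * (1 - δ₃) * δ₁ =
      δ₁ * δ₃ * (1 - δ₁) * (1 - δ₃) * (δ₁ - δ₃) /
        (γ * (γ - m) * ((γ - 1) * (γ - 1 - (m - 2)))) := by
    unfold rootRatio
    field_simp
    ring
  rw [hfactor]
  have : 0 < δ₁ * δ₃ := mul_pos_of_neg_of_neg hδ₁ (hδ₃₁.trans hδ₁)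
  have : 0 < 1 - δ₁ := by linarith
  have : 0 < 1 - δ₃ := by linarith
  have : 0 < δ₁ - δ₃ := sub_pos.2 hδ₃₁
  positivity

end RatioInequalities

/-- The numerator `N` of the threshold `k = (N / D) (β_s / β_b)`. -/
def thresholdNum (η a₀ γ δ₁ δ₃ : ℝ) : ℝ :=
  δ₁ * δ₃ * (1 + η) - (δ₃ + η * δ₁) * γ - a₀ * (δ₁ - δ₃) * γ

/-- The denominator `D` of the threshold `k = (N / D) (β_s / β_b)`. -/
def thresholdDen (η a₁ γ δ₁ δ₃ : ℝ) : ℝ :=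
  (1 + η) * (δ₁ * δ₃ + γ) - (δ₃ + η * δ₁) * γ - (δ₁ + η * δ₃) - a₁ * (γ - 1) * (δ₁ - δ₃)

section Threshold

variable {η a₀ a₁ γ δ₁ δ₃ : ℝ}

lemma thresholdDen_eq (η a₁ γ δ₁ δ₃ : ℝ) :
    thresholdDen η a₁ γ δ₁ δ₃ = (1 + η) * (δ₁ * δ₃ + γ) -
      δ₁ * ((a₁ + η) * γ + (1 - a₁)) - δ₃ * ((a₁ + η) + γ * (1 - a₁)) := by
  unfold thresholdDen
  ring

lemma one_sub_mul_thresholdNum_add (η a₀ a₁ γ δ₁ δ₃ : ℝ) :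
    (1 - δ₁) * thresholdNum η a₀ γ δ₁ δ₃ + δ₁ * thresholdDen η a₁ γ δ₁ δ₃ =
      (δ₁ - δ₃) * smoothFitGap γ (1 - a₀) (1 - a₁) δ₁ := by
  unfold thresholdNum thresholdDen smoothFitGap
  ring

lemma sub_one_mul_thresholdNum_sub (η a₀ a₁ γ δ₁ δ₃ : ℝ) :
    (δ₃ - 1) * thresholdNum η a₀ γ δ₁ δ₃ - δ₃ * thresholdDen η a₁ γ δ₁ δ₃ =
      (δ₁ - δ₃) * smoothFitGap γ (η + a₀) (η + a₁) δ₃ := by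
  unfold thresholdNum thresholdDen smoothFitGap
  ring

lemma thresholdNum_pos (hη : 0 < η) (ha₀ : a₀ < 1) (hγ : 0 < γ) (hδ₃₁ : δ₃ < δ₁) (hδ₁ : δ₁ < 0) :
    0 < thresholdNum η a₀ γ δ₁ δ₃ := by
  have hregroup : thresholdNum η a₀ γ δ₁ δ₃ =
      γ * (1 - a₀) * (δ₁ - δ₃) + (1 + η) * (-δ₁) * (γ - δ₃) := by
    unfold thresholdNum
    ring
  rw [hregroup]
  have : 0 < 1 - a₀ := sub_pos.2 ha₀
  have : 0 < δ₁ - δ₃ := sub_pos.2 hδ₃₁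
  have : 0 < -δ₁ := neg_pos.2 hδ₁
  have : 0 < γ - δ₃ := by linarith
  positivity

lemma thresholdDen_pos (hN : 0 < thresholdNum η a₀ γ δ₁ δ₃)
    (hgap : 0 < smoothFitGap γ (η + a₀) (η + a₁) δ₃) (hδ₃₁ : δ₃ < δ₁) (hδ₃ : δ₃ < 0) :
    0 < thresholdDen η a₁ γ δ₁ δ₃ := by
  have hprod : 0 < -δ₃ * thresholdDen η a₁ γ δ₁ δ₃ := by
    have hgap' : 0 < (δ₁ - δ₃) * smoothFitGap γ (η + a₀) (η + a₁) δ₃ :=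
      mul_pos (sub_pos.2 hδ₃₁) hgap
    have hN' : 0 < (1 - δ₃) * thresholdNum η a₀ γ δ₁ δ₃ := mul_pos (by linarith) hN
    linarith [sub_one_mul_thresholdNum_sub η a₀ a₁ γ δ₁ δ₃]
  exact pos_of_mul_pos_right hprod (neg_pos.2 hδ₃).le

lemma numeratorC1_eq {βs βb : ℝ} (hβb : βb ≠ 0) (hD : thresholdDen η a₁ γ δ₁ δ₃ ≠ 0) :
    -δ₃ * βs + (δ₃ - 1) * βb *
        (thresholdNum η a₀ γ δ₁ δ₃ / thresholdDen η a₁ γ δ₁ δ₃ * (βs / βb)) =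
      βs / thresholdDen η a₁ γ δ₁ δ₃ *
        ((δ₁ - δ₃) * smoothFitGap γ (η + a₀) (η + a₁) δ₃) := by
  rw [← sub_one_mul_thresholdNum_sub]
  field_simp
  ring

lemma numeratorC3_eq {βs βb : ℝ} (hβb : βb ≠ 0) (hD : thresholdDen η a₁ γ δ₁ δ₃ ≠ 0) :
    δ₁ * βs - (δ₁ - 1) * βb *
        (thresholdNum η a₀ γ δ₁ δ₃ / thresholdDen η a₁ γ δ₁ δ₃ * (βs / βb)) =
      βs / thresholdDen η a₁ γ δ₁ δ₃ *
        ((δ₁ - δ₃) * smoothFitGap γ (1 - a₀) (1 - a₁) δ₁) := by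
  rw [← one_sub_mul_thresholdNum_add]
  field_simp
  ring

theorem coefficients_pos {m βs βb k : ℝ} (hβs : 0 < βs) (hβb : 0 < βb) (hη : 0 < η) (hγ : 1 < γ)
    (hmγ : m < γ) (hδ₃₁ : δ₃ < δ₁) (hδ₁ : δ₁ < 0) (ha₀ : a₀ < 1)
    (hu₀ : 1 - a₀ = rootRatio m γ δ₁) (hu₁ : 1 - a₁ = rootRatio (m - 2) (γ - 1) (δ₁ - 1))
    (hv₀ : η + a₀ = η * rootRatio m γ δ₃)
    (hv₁ : η + a₁ = η * rootRatio (m - 2) (γ - 1) (δ₃ - 1))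
    (hk : k = thresholdNum η a₀ γ δ₁ δ₃ / thresholdDen η a₁ γ δ₁ δ₃ * (βs / βb)) :
    0 < (-δ₃ * βs + (δ₃ - 1) * βb * k) / ((δ₁ - δ₃) * k ^ δ₁) ∧
    0 < ((1 - a₀) * (η + a₁) * (1 - δ₁) * (-δ₃) + (1 - a₁) * (η + a₀) * (1 - δ₃) * δ₁) * βs /
      (thresholdDen η a₁ γ δ₁ δ₃ * k ^ γ) ∧
    0 < (δ₁ * βs - (δ₁ - 1) * βb * k) / ((δ₁ - δ₃) * k ^ δ₃) := by
  have hδ₃ : δ₃ < 0 := hδ₃₁.trans hδ₁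
  have hsub : 0 < δ₁ - δ₃ := sub_pos.2 hδ₃₁
  have hgap₁ : 0 < smoothFitGap γ (1 - a₀) (1 - a₁) δ₁ := by
    rw [hu₀, hu₁]
    exact smoothFitGap_rootRatio_pos hδ₁ hγ hmγ
  have hgap₃ : 0 < smoothFitGap γ (η + a₀) (η + a₁) δ₃ := by
    rw [hv₀, hv₁, smoothFitGap_mul_mul]
    exact mul_pos hη (smoothFitGap_rootRatio_pos hδ₃ hγ hmγ)
  have hN : 0 < thresholdNum η a₀ γ δ₁ δ₃ :=
    thresholdNum_pos hη ha₀ (one_pos.trans hγ) hδ₃₁ hδ₁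
  have hD : 0 < thresholdDen η a₁ γ δ₁ δ₃ := thresholdDen_pos hN hgap₃ hδ₃₁ hδ₃
  have hk_pos : 0 < k := hk ▸ mul_pos (div_pos hN hD) (div_pos hβs hβb)
  refine ⟨div_pos ?_ (mul_pos hsub (rpow_pos_of_pos hk_pos _)),
    div_pos (mul_pos ?_ hβs) (mul_pos hD (rpow_pos_of_pos hk_pos _)),
    div_pos ?_ (mul_pos hsub (rpow_pos_of_pos hk_pos _))⟩
  · rw [hk, numeratorC1_eq hβb.ne' hD.ne']
    exact mul_pos (div_pos hβs hD) (mul_pos hsub hgap₃)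
  · rw [hu₀, hu₁, hv₀, hv₁]
    linear_combination η * rootRatio_cross_pos hδ₃₁ hδ₁ hγ hmγ
  · rw [hk, numeratorC3_eq hβb.ne' hD.ne']
    exact mul_pos (div_pos hβs hD) (mul_pos hsub hgap₁)

end Threshold

theorem stmt_4_general (μ1 μ2 ρ σ lam0 lam1 βs βb η a0 a1 m δ1 δ3 γ2 k C1 C2 C3 : ℝ)
    (hσ : 0 < σ) (hlam0 : 0 < lam0) (hlam1 : 0 < lam1)
    (hμ1 : μ1 < ρ) (hμ2 : μ2 < ρ + lam0)
    (hm : m = 1 + (μ1 - μ2) / σ)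
    (hβs : 0 < βs) (hβb : 0 < βb)
    (hη : η = lam0 / lam1) (ha0 : a0 = lam0 / (ρ + lam0 - μ1))
    (ha1 : a1 = lam0 / (ρ + lam0 - μ2))
    (hδ1 : δ1 = (m - Real.sqrt (m ^ 2 + 4 * (ρ - μ1) / σ)) / 2)
    (hδ3 : δ3 = (m - Real.sqrt (m ^ 2 + 4 * (ρ + lam0 + lam1 - μ1) / σ)) / 2)
    (hγ2 : γ2 = (m + Real.sqrt (m ^ 2 + 4 * (ρ + lam0 - μ1) / σ)) / 2)
    (hk : k = (δ1 * δ3 * (1 + η) - (δ3 + η * δ1) * γ2 - a0 * (δ1 - δ3) * γ2) /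
      ((1 + η) * (δ1 * δ3 + γ2) - (δ3 + η * δ1) * γ2 - (δ1 + η * δ3) - a1 * (γ2 - 1) * (δ1 - δ3)) *
      (βs / βb))
    (hC1 : C1 = (-δ3 * βs + (δ3 - 1) * βb * k) / ((δ1 - δ3) * k ^ δ1))
    (hC3 : C3 = (δ1 * βs - (δ1 - 1) * βb * k) / ((δ1 - δ3) * k ^ δ3))
    (hC2 : C2 =
      ((1 - a0) * (η + a1) * (1 - δ1) * (-δ3) + (1 - a1) * (η + a0) * (1 - δ3) * δ1) * βs /
      (((1 + η) * (δ1 * δ3 + γ2) - δ1 * ((a1 + η) * γ2 + (1 - a1)) -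
        δ3 * ((a1 + η) + γ2 * (1 - a1))) * k ^ γ2)) :
    0 < C1 ∧ 0 < C2 ∧ 0 < C3 := by
  have hchar₀ : CharExponents σ m μ1 ρ lam0 lam1 γ2 δ1 δ3 := by
    subst δ1 δ3 γ2
    exact ⟨mul_lowerRoot_mul_sub hσ (by linarith), mul_upperRoot_mul_sub hσ (by linarith),
      mul_lowerRoot_mul_sub hσ (by linarith)⟩
  have hchar₁ : CharExponents σ (m - 2) μ2 ρ lam0 lam1 (γ2 - 1) (δ1 - 1) (δ3 - 1) :=
    hchar₀.change_numeraire (by rw [hm]; field_simp; ring)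
  have hmγ : m < γ2 := hγ2 ▸ lt_upperRoot hσ (by linarith)
  have hγ : 1 < γ2 := sub_pos.1 (hchar₁.upperExponent_pos hσ hμ2 (by linarith))
  have hδ1_neg : δ1 < 0 := hδ1 ▸ lowerRoot_neg hσ (by linarith)
  have hδ31 : δ3 < δ1 := by
    rw [hδ1, hδ3]
    exact lowerRoot_lt_lowerRoot hσ (by linarith) (by linarith)
  have ha0_lt : a0 < 1 := by rw [ha0, div_lt_one] <;> linarith
  have hrate₀ : ρ + lam0 - μ1 ≠ 0 := by linarith
  have hrate₁ : ρ + lam0 - μ2 ≠ 0 := (sub_pos.2 hμ2).ne'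
  rw [hC1, hC2, hC3, ← thresholdDen_eq]
  refine coefficients_pos hβs hβb (hη ▸ div_pos hlam0 hlam1) hγ hmγ hδ31 hδ1_neg ha0_lt
    ?_ ?_ ?_ ?_ hk
  · rw [ha0, hchar₀.one_sub_div_eq_rootRatio hσ.ne' hrate₀]
  · rw [ha1, hchar₁.one_sub_div_eq_rootRatio hσ.ne' hrate₁]
  · rw [hη, ha0, hchar₀.div_add_div_eq_mul_rootRatio hσ.ne' hlam1.ne' hrate₀]
  · rw [hη, ha1, hchar₁.div_add_div_eq_mul_rootRatio hσ.ne' hlam1.ne' hrate₁]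

theorem stmt_4 (μ1 μ2 ρ σ lam0 lam1 K βs βb η a0 a1 m δ1 δ3 γ2 k C1 C2 C3 : ℝ)
    (hσ : 0 < σ) (hlam0 : 0 < lam0) (hlam1 : 0 < lam1)
    (hμ1 : μ1 < ρ) (hμ2 : μ2 < ρ)
    (hm : m = 1 + (μ1 - μ2) / σ)
    (hK0 : 0 < K) (hK1 : K < 1) (hβs : βs = 1 - K) (hβb : βb = 1 + K)
    (hη : η = lam0 / lam1) (ha0 : a0 = lam0 / (ρ + lam0 - μ1)) (ha1 : a1 = lam0 / (ρ + lam0 - μ2))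
    (hδ1 : δ1 = (m - Real.sqrt (m ^ 2 + 4 * (ρ - μ1) / σ)) / 2)
    (hδ3 : δ3 = (m - Real.sqrt (m ^ 2 + 4 * (ρ + lam0 + lam1 - μ1) / σ)) / 2)
    (hγ2 : γ2 = (m + Real.sqrt (m ^ 2 + 4 * (ρ + lam0 - μ1) / σ)) / 2)
    (hk : k = (δ1 * δ3 * (1 + η) - (δ3 + η * δ1) * γ2 - a0 * (δ1 - δ3) * γ2) /
      ((1 + η) * (δ1 * δ3 + γ2) - (δ3 + η * δ1) * γ2 - (δ1 + η * δ3) - a1 * (γ2 - 1) * (δ1 - δ3)) *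
      (βs / βb))
    (hC1 : C1 = (-δ3 * βs + (δ3 - 1) * βb * k) / ((δ1 - δ3) * k ^ δ1))
    (hC3 : C3 = (δ1 * βs - (δ1 - 1) * βb * k) / ((δ1 - δ3) * k ^ δ3))
    (hC2 : C2 = ((1 - a0) * (η + a1) * (1 - δ1) * (-δ3) + (1 - a1) * (η + a0) * (1 - δ3) * δ1) * βs /
      (((1 + η) * (δ1 * δ3 + γ2) - δ1 * ((a1 + η) * γ2 + (1 - a1)) - δ3 * ((a1 + η) + γ2 * (1 - a1))) *
        k ^ γ2)) :
    0 < C1 ∧ 0 < C2 ∧ 0 < C3 :=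
  stmt_4_general μ1 μ2 ρ σ lam0 lam1 βs βb η a0 a1 m δ1 δ3 γ2 k C1 C2 C3 hσ hlam0 hlam1 hμ1
    (by linarith) hm (by linarith) (by linarith) hη ha0 ha1 hδ1 hδ3 hγ2 hk hC1 hC3 hC2
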